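/- Let n, k ≥ 1, set N = n+k, let q ∈ ℂ∖{0}, and fix t ∈ ℂ with t^N = q. For σ ∈ 𝔓_{≤n,k} define y_σ ∈ ℂ^k by (y_σ)_j = t·ζ^{I^{(k)}(σ^t)_j} for j = 1,…,k. Then: (i) the entries of y_σ are pairwise distinct and satisfy (y_σ)_j^N = (−1)^{k−1} q for every j; (ii) the assignment σ ↦ (orbit of y_σ under permutation of coordinates) is a bijection from 𝔓_{≤n,k} onto the set of orbits, under the permutation action of the symmetric group S_k on ℂ^k, of the tuples y ∈ ℂ^k with pairwise distinct entries satisfying y_1^N = y_2^N = ⋯ = y_k^N = (−1)^{k−1} q. -/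

import Mathlib

noncomputable section

open scoped BigOperators

/-- `𝔓_{≤r,c}`: partitions with at most `r` parts, each part at most `c`,
encoded as weakly decreasing functions `Fin r → Fin (c+1)`. -/
abbrev PartBox (r c : ℕ) :=
  {f : Fin r → Fin (c + 1) // ∀ i j : Fin r, i ≤ j → (f j : ℕ) ≤ (f i : ℕ)}

/-- The parts of a partition, as natural numbers. -/
def partVal {r c : ℕ} (σ : PartBox r c) (i : Fin r) : ℕ := (σ.1 i : ℕ)

/-- The transpose (conjugate) partition of `μ`, with `c` parts: `μ^t_j = #{i | μ_i ≥ j}`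
(here `j` is the 0-based index, so this computes `μ^t_{j+1}`). -/
def transpGen {r : ℕ} (μ : Fin r → ℕ) (c : ℕ) : Fin c → ℕ :=
  fun j => (Finset.univ.filter fun i : Fin r => (j : ℕ) + 1 ≤ μ i).card

/-- `I^{(m)}(τ)_j = (m+1)/2 + τ_{m+1-j} - (m+1-j)` (1-based `j`), as a rational number. -/
def Imap (m : ℕ) (τ : Fin m → ℕ) (j : Fin m) : ℚ :=
  ((m : ℚ) + 1) / 2 + (τ j.rev : ℚ) - ((m : ℚ) - (j : ℚ))

/-- `ζ^t = exp(2πι t/N)` for rational exponents `t`. -/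
def zeta (N : ℕ) (t : ℚ) : ℂ :=
  Complex.exp (2 * Real.pi * Complex.I * (t : ℂ) / (N : ℂ))

/-- The set of tuples `y ∈ ℂ^k` with pairwise distinct entries satisfying
`y_1^N = ⋯ = y_k^N = (-1)^{k-1} q`, where `N = n + k`. -/
def fermiSol (n k : ℕ) (q : ℂ) : Set (Fin k → ℂ) :=
  {y | Function.Injective y ∧ ∀ j, y j ^ (n + k) = (-1) ^ (k - 1) * q}

/-- The free-fermion Bethe root `y_σ` attached to `σ ∈ 𝔓_{≤ n,k}`:
`(y_σ)_j = t · ζ^{I^{(k)}(σ^t)_j}` where `t^N = q`. -/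
def fermiRoot (n k : ℕ) (t : ℂ) (σ : PartBox n k) (j : Fin k) : ℂ :=
  t * zeta (n + k) (Imap k (transpGen (partVal σ) k) j)

/-!
Since `I^{(k)}(μ)_j = (1 - k) / 2 + (μ_{k+1-j} + j - 1)`, the entries of `y_σ` are `c ζ^{e_j}`,
where `c = t ζ^{(1-k)/2}` satisfies `c ^ N = (-1) ^ (k - 1) q` and `e_1 < ⋯ < e_k` are the
β-numbers of the transpose of `σ`. The solutions of `x ^ N = c ^ N` are `c ζ^e` with a unique
`0 ≤ e < N`, so `S_k`-orbits of solutions with distinct entries correspond to `k`-element subsets of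
`{0, …, N - 1}`; and these subsets are exactly the sets of β-numbers of the partitions with `k`
(possibly zero) parts, each at most `n`.
-/

section Transpose

variable {r c : ℕ} {μ : Fin r → ℕ}

theorem lt_transpGen_iff (hμ : Antitone μ) (i : Fin r) (j : Fin c) :
    (i : ℕ) < transpGen μ c j ↔ (j : ℕ) < μ i :=
  Tuple.lt_card_ge_iff_apply_ge_of_antitone hμ

theorem transpGen_le (μ : Fin r → ℕ) (j : Fin c) : transpGen μ c j ≤ r :=
  (Finset.card_le_univ _).trans_eq (Fintype.card_fin r)

theorem transpGen_antitone (μ : Fin r → ℕ) (c : ℕ) : Antitone (transpGen μ c) := fun _ _ hij =>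
  Finset.card_le_card <| Finset.monotone_filter_right _ fun _ _ h =>
    (Nat.succ_le_succ hij).trans h

theorem transpGen_transpGen (hμ : Antitone μ) (hc : ∀ i, μ i ≤ c) :
    transpGen (transpGen μ c) r = μ := by
  funext i
  refine eq_of_forall_lt_iff fun j => ?_
  by_cases hj : j < c
  · rw [lt_transpGen_iff (transpGen_antitone μ c) ⟨j, hj⟩, lt_transpGen_iff hμ]
  · have := transpGen_le (transpGen μ c) i
    have := hc i
    lia

end Transpose

section PartBox

variable {r c : ℕ}

theorem partVal_antitone (σ : PartBox r c) : Antitone (partVal σ) :=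
  fun i j hij => σ.2 i j hij

theorem partVal_le (σ : PartBox r c) (i : Fin r) : partVal σ i ≤ c :=
  Nat.le_of_lt_succ (σ.1 i).2

theorem partVal_injective : Function.Injective (partVal : PartBox r c → Fin r → ℕ) :=
  fun _ _ h => Subtype.ext <| funext fun i => Fin.ext (congrFun h i)

theorem exists_partVal_eq {μ : Fin r → ℕ} (hμ : Antitone μ) (hc : ∀ i, μ i ≤ c) :
    ∃ σ : PartBox r c, partVal σ = μ :=
  ⟨⟨fun i => ⟨μ i, Nat.lt_succ_of_le (hc i)⟩, fun _ _ hij => hμ hij⟩, rfl⟩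

theorem transpGen_partVal_injective :
    Function.Injective fun σ : PartBox r c => transpGen (partVal σ) c :=
  fun σ τ h => partVal_injective <| by
    rw [← transpGen_transpGen (partVal_antitone σ) (partVal_le σ),
      ← transpGen_transpGen (partVal_antitone τ) (partVal_le τ)]
    exact congrArg (transpGen · r) h

theorem exists_transpGen_partVal_eq {μ : Fin c → ℕ} (hμ : Antitone μ) (hr : ∀ j, μ j ≤ r) :
    ∃ σ : PartBox r c, transpGen (partVal σ) c = μ := by
  obtain ⟨σ, hσ⟩ := exists_partVal_eq (transpGen_antitone μ r) (transpGen_le μ)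
  exact ⟨σ, by rw [hσ, transpGen_transpGen hμ hr]⟩

end PartBox

section BetaNumber

variable {n k : ℕ}

/-- The β-numbers (first-column hook lengths) of a partition `μ` with `k` parts, some of which may
be zero, listed in increasing order. -/
def betaNumber (μ : Fin k → ℕ) (j : Fin k) : ℕ :=
  μ j.rev + j

theorem betaNumber_strictMono {μ : Fin k → ℕ} (hμ : Antitone μ) : StrictMono (betaNumber μ) :=
  fun _ _ hij => add_lt_add_of_le_of_lt (hμ (Fin.rev_le_rev.2 hij.le)) hij

theorem betaNumber_lt {μ : Fin k → ℕ} (hμ : ∀ j, μ j ≤ n) (j : Fin k) : betaNumber μ j < n + k :=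
  add_lt_add_of_le_of_lt (hμ j.rev) j.2

theorem betaNumber_injective : Function.Injective (betaNumber : (Fin k → ℕ) → Fin k → ℕ) :=
  fun μ ν h => funext fun j => by
    simpa [betaNumber] using congrFun h j.rev

theorem val_sub_le_sub_of_strictMono {e : Fin k → ℕ} (he : StrictMono e) (i j : Fin k) :
    (j : ℕ) - i ≤ e j - e i := by
  rw [← Fin.card_Ico, ← Nat.card_Ico]
  refine Finset.card_le_card_of_injOn e (fun l hl => ?_) he.injective.injOn
  simpa [he.le_iff_le, he.lt_iff_lt] using hl

theorem val_le_of_strictMono {e : Fin k → ℕ} (he : StrictMono e) (j : Fin k) : (j : ℕ) ≤ e j :=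
  (val_sub_le_sub_of_strictMono he ⟨0, j.pos⟩ j).trans (Nat.sub_le _ _)

theorem le_add_val_of_strictMono {e : Fin k → ℕ} (he : StrictMono e) (hlt : ∀ j, e j < n + k)
    (j : Fin k) : e j ≤ n + j := by
  have hk : k - 1 < k := Nat.sub_one_lt_of_lt j.2
  have hgap : k - 1 - j ≤ e ⟨k - 1, hk⟩ - e j := val_sub_le_sub_of_strictMono he j ⟨k - 1, hk⟩
  have hmono : e j ≤ e ⟨k - 1, hk⟩ := he.monotone (Nat.le_sub_one_of_lt j.2)
  have hlast := hlt ⟨k - 1, hk⟩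
  lia

theorem exists_betaNumber_eq {e : Fin k → ℕ} (he : StrictMono e) (hlt : ∀ j, e j < n + k) :
    ∃ μ : Fin k → ℕ, Antitone μ ∧ (∀ j, μ j ≤ n) ∧ betaNumber μ = e := by
  refine ⟨fun j => e j.rev - j.rev, fun i j hij => ?_, fun j => ?_, funext fun j => ?_⟩
  · have hgap := val_sub_le_sub_of_strictMono he j.rev i.rev
    have hmono := he.monotone (Fin.rev_le_rev.2 hij)
    lia
  · exact Nat.sub_le_of_le_add (le_add_val_of_strictMono he hlt j.rev)
  · simpa [betaNumber] using Nat.sub_add_cancel (val_le_of_strictMono he j)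

end BetaNumber

section FermiExponent

variable {n k : ℕ}

/-- The integers `e_1 < ⋯ < e_k` for which `(y_σ)_j = c ζ^{e_j}`, with `c` independent of `σ` and
`j`; see `fermiRoot_eq`. -/
def fermiExponent (σ : PartBox n k) : Fin k → ℕ :=
  betaNumber (transpGen (partVal σ) k)

theorem fermiExponent_strictMono (σ : PartBox n k) : StrictMono (fermiExponent σ) :=
  betaNumber_strictMono (transpGen_antitone _ k)

theorem fermiExponent_lt (σ : PartBox n k) (j : Fin k) : fermiExponent σ j < n + k :=
  betaNumber_lt (transpGen_le _) j

theorem fermiExponent_injective :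
    Function.Injective (fermiExponent : PartBox n k → Fin k → ℕ) :=
  betaNumber_injective.comp transpGen_partVal_injective

theorem exists_fermiExponent_eq {e : Fin k → ℕ} (he : StrictMono e) (hlt : ∀ j, e j < n + k) :
    ∃ σ : PartBox n k, fermiExponent σ = e := by
  obtain ⟨μ, hμ, hμn, rfl⟩ := exists_betaNumber_eq he hlt
  obtain ⟨σ, rfl⟩ := exists_transpGen_partVal_eq hμ hμn
  exact ⟨σ, rfl⟩

end FermiExponent

section Sorting

variable {k : ℕ} {α : Type*}

theorem exists_strictMono_comp_perm_eq [LinearOrder α] {f : Fin k → α}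
    (hf : Function.Injective f) :
    ∃ g : Fin k → α, ∃ π : Equiv.Perm (Fin k), StrictMono g ∧ g ∘ π = f :=
  ⟨f ∘ Tuple.sort f, (Tuple.sort f).symm,
    (Tuple.monotone_sort f).strictMono_of_injective (hf.comp (Tuple.sort f).injective),
    funext fun j => congrArg f ((Tuple.sort f).apply_symm_apply j)⟩

theorem eq_of_comp_perm_eq_of_monotone [PartialOrder α] {f g : Fin k → α} (hf : Monotone f)
    (hg : Monotone g) {π : Equiv.Perm (Fin k)} (h : f ∘ π = g) : f = g :=
  (Tuple.unique_monotone (σ := 1) hf (h ▸ hg)).trans h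

end Sorting

section PrimitiveRoot

variable {R : Type*} [CommRing R] [IsDomain R] {N k : ℕ} {ω c : R}

theorem exists_lt_mul_pow_eq_of_pow_eq (hN : 0 < N) (hω : IsPrimitiveRoot ω N) {x : R}
    (hx : x ^ N = c ^ N) : ∃ i < N, c * ω ^ i = x := by
  have hmem : x ∈ Polynomial.nthRoots N (c ^ N) := (Polynomial.mem_nthRoots hN).2 hx
  simpa [hω.nthRoots_eq rfl, mul_comm] using hmem

theorem exists_strictMono_perm_of_pow_eq (hN : 0 < N) (hω : IsPrimitiveRoot ω N)
    {y : Fin k → R} (hy : Function.Injective y) (hyN : ∀ j, y j ^ N = c ^ N) :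
    ∃ e : Fin k → ℕ, StrictMono e ∧ (∀ j, e j < N) ∧
      ∃ π : Equiv.Perm (Fin k), y = (fun j => c * ω ^ e j) ∘ π := by
  choose b hbN hb using fun j => exists_lt_mul_pow_eq_of_pow_eq hN hω (hyN j)
  have hb_inj : Function.Injective b := fun i j h => hy (by rw [← hb i, ← hb j, h])
  obtain ⟨e, π, he, rfl⟩ := exists_strictMono_comp_perm_eq hb_inj
  exact ⟨e, he, fun j => by simpa using hbN (π.symm j), π, funext fun j => (hb j).symm⟩

end PrimitiveRoot

section Zeta

theorem zeta_add (N : ℕ) (s t : ℚ) : zeta N (s + t) = zeta N s * zeta N t := by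
  rw [zeta, zeta, zeta, ← Complex.exp_add]
  push_cast
  ring_nf

theorem zeta_natCast (N m : ℕ) : zeta N m = zeta N 1 ^ m := by
  rw [zeta, zeta, ← Complex.exp_nat_mul]
  push_cast
  ring_nf

theorem isPrimitiveRoot_zeta_one {N : ℕ} (hN : N ≠ 0) : IsPrimitiveRoot (zeta N 1) N := by
  simpa [zeta] using Complex.isPrimitiveRoot_exp N hN

theorem zeta_pow_self {N : ℕ} (hN : N ≠ 0) (t : ℚ) :
    zeta N t ^ N = Complex.exp (2 * Real.pi * Complex.I * t) := by
  rw [zeta, ← Complex.exp_nat_mul, mul_div_cancel₀ _ (Nat.cast_ne_zero.2 hN)]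

theorem zeta_neg_half_natCast_pow_self {N : ℕ} (hN : N ≠ 0) (m : ℕ) :
    zeta N (-(m / 2)) ^ N = (-1) ^ m := by
  have hexp : 2 * Real.pi * Complex.I * ((-(m / 2) : ℚ) : ℂ) = m * -(Real.pi * Complex.I) := by
    push_cast
    ring
  rw [zeta_pow_self hN, hexp, Complex.exp_nat_mul, Complex.exp_neg, Complex.exp_pi_mul_I,
    inv_neg_one]

end Zeta

section FermiRoot

variable {n k : ℕ} {t : ℂ}

/-- The factor `c = t ζ^{(1-k)/2}` common to all entries of all the Bethe roots `y_σ`. -/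
def fermiBase (n k : ℕ) (t : ℂ) : ℂ :=
  t * zeta (n + k) ((1 - k) / 2)

theorem fermiBase_ne_zero (ht : t ≠ 0) : fermiBase n k t ≠ 0 :=
  mul_ne_zero ht (Complex.exp_ne_zero _)

theorem fermiBase_pow (hk : 0 < k) (t : ℂ) :
    fermiBase n k t ^ (n + k) = (-1) ^ (k - 1) * t ^ (n + k) := by
  have hshift : ((1 - k) / 2 : ℚ) = -((k - 1 : ℕ) / 2) := by
    rw [Nat.cast_pred hk]
    ring
  rw [fermiBase, mul_pow, hshift, zeta_neg_half_natCast_pow_self (by lia), mul_comm]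

theorem imap_eq (μ : Fin k → ℕ) (j : Fin k) : Imap k μ j = (1 - k) / 2 + betaNumber μ j := by
  rw [Imap, betaNumber]
  push_cast
  ring

theorem fermiRoot_eq (t : ℂ) (σ : PartBox n k) (j : Fin k) :
    fermiRoot n k t σ j = fermiBase n k t * zeta (n + k) 1 ^ fermiExponent σ j := by
  rw [fermiRoot, imap_eq, zeta_add, zeta_natCast, ← mul_assoc, fermiBase, fermiExponent]

theorem fermiExponent_eq_of_fermiRoot_eq (ht : t ≠ 0) {σ τ : PartBox n k} {i j : Fin k}
    (h : fermiRoot n k t σ i = fermiRoot n k t τ j) : fermiExponent σ i = fermiExponent τ j := by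
  have hω : IsPrimitiveRoot (zeta (n + k) 1) (n + k) :=
    isPrimitiveRoot_zeta_one (Nat.add_pos_right n i.pos).ne'
  rw [fermiRoot_eq, fermiRoot_eq] at h
  exact hω.pow_inj (fermiExponent_lt σ i) (fermiExponent_lt τ j)
    (mul_left_cancel₀ (fermiBase_ne_zero ht) h)

theorem fermiRoot_injective (ht : t ≠ 0) (σ : PartBox n k) :
    Function.Injective (fermiRoot n k t σ) :=
  fun _ _ h => (fermiExponent_strictMono σ).injective (fermiExponent_eq_of_fermiRoot_eq ht h)

theorem fermiRoot_pow (t : ℂ) (σ : PartBox n k) (j : Fin k) :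
    fermiRoot n k t σ j ^ (n + k) = (-1) ^ (k - 1) * t ^ (n + k) := by
  have hω : IsPrimitiveRoot (zeta (n + k) 1) (n + k) :=
    isPrimitiveRoot_zeta_one (Nat.add_pos_right n j.pos).ne'
  rw [fermiRoot_eq, mul_pow, pow_right_comm, hω.pow_eq_one, one_pow, mul_one, fermiBase_pow j.pos]

theorem exists_eq_fermiRoot_comp_perm (hk : 0 < k) {y : Fin k → ℂ}
    (hy : y ∈ fermiSol n k (t ^ (n + k))) :
    ∃ σ : PartBox n k, ∃ π : Equiv.Perm (Fin k), y = fermiRoot n k t σ ∘ π := by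
  have hN : 0 < n + k := Nat.add_pos_right n hk
  obtain ⟨e, he, hlt, π, rfl⟩ := exists_strictMono_perm_of_pow_eq hN
    (isPrimitiveRoot_zeta_one hN.ne') hy.1 fun j => (hy.2 j).trans (fermiBase_pow hk t).symm
  obtain ⟨σ, rfl⟩ := exists_fermiExponent_eq he hlt
  exact ⟨σ, π, funext fun j => (fermiRoot_eq t σ (π j)).symm⟩

theorem eq_of_fermiRoot_comp_perm_eq (ht : t ≠ 0) {σ τ : PartBox n k} {π : Equiv.Perm (Fin k)}
    (h : fermiRoot n k t σ ∘ π = fermiRoot n k t τ) : σ = τ :=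
  fermiExponent_injective <| eq_of_comp_perm_eq_of_monotone
    (fermiExponent_strictMono σ).monotone (fermiExponent_strictMono τ).monotone
    (funext fun j => fermiExponent_eq_of_fermiRoot_eq ht (congrFun h j))

end FermiRoot

/-- Classification of the solutions of the free-fermion Bethe Ansatz
equations `y_j^N = (-1)^{k-1} q`:
(i) each `y_σ` is a solution with pairwise distinct entries;
(ii) `σ ↦ S_k-orbit of y_σ` is a bijection from `𝔓_{≤n,k}` onto the set of `S_k`-orbits of
tuples with pairwise distinct entries solving the equations. -/
theorem fermi_bethe_roots_classification (n k : ℕ) (hn : 1 ≤ n) (hk : 1 ≤ k)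
    (q : ℂ) (hq : q ≠ 0) (t : ℂ) (ht : t ^ (n + k) = q) :
    (∀ σ : PartBox n k, fermiRoot n k t σ ∈ fermiSol n k q) ∧
    (∀ y ∈ fermiSol n k q, ∃ σ : PartBox n k, ∃ π : Equiv.Perm (Fin k),
        y = fermiRoot n k t σ ∘ π) ∧
    (∀ σ τ : PartBox n k,
        (∃ π : Equiv.Perm (Fin k), fermiRoot n k t σ ∘ π = fermiRoot n k t τ) → σ = τ) := by
  subst ht
  have ht : t ≠ 0 := ne_zero_pow (Nat.add_pos_right n hk).ne' hq
  exact ⟨fun σ => ⟨fermiRoot_injective ht σ, fermiRoot_pow t σ⟩,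
    fun _ hy => exists_eq_fermiRoot_comp_perm hk hy,
    fun _ _ ⟨_, h⟩ => eq_of_fermiRoot_comp_perm_eq ht h⟩
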